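/- Let d_1 ≤ d_2 be positive integers with d_1 ≥ 2, let A_1, A_2 > 0, and let S(q) = A_1 e^{−q_1} + A_2 e^{−q_2}, with H the associated Ricci-flat cohomogeneity one Hamiltonian on ℝ²×ℝ². Let F(q,p) = F_{20}(q)p_1² + F_{02}(q)p_2² + F_{11}(q)p_1p_2 + F_1(q)p_1 + F_2(q)p_2 + F_0(q), where all six coefficient functions are C¹ on ℝ², and suppose {F,H} = 0 at every point of V_H. If in addition 4d_1 ≠ d_2(d_1 − 1), then F is a trivial first integral: there exist a C¹ function φ : ℝ² → ℝ and a constant c ∈ ℝ such that F(q,p) = φ(q)·H(q,p) + c for all (q,p) ∈ ℝ²×ℝ². -/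

import Mathlib

/-- Partial derivative in the `i`-th `q`-coordinate. -/
noncomputable def pderivQ (F : (Fin 2 → ℝ) → (Fin 2 → ℝ) → ℝ) (i : Fin 2)
    (q p : Fin 2 → ℝ) : ℝ :=
  deriv (fun t => F (Function.update q i t) p) (q i)

/-- Partial derivative in the `i`-th `p`-coordinate. -/
noncomputable def pderivP (F : (Fin 2 → ℝ) → (Fin 2 → ℝ) → ℝ) (i : Fin 2)
    (q p : Fin 2 → ℝ) : ℝ :=
  deriv (fun t => F q (Function.update p i t)) (p i)

/-- Canonical Poisson bracket on `ℝ² × ℝ²`. -/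
noncomputable def poisson (F G : (Fin 2 → ℝ) → (Fin 2 → ℝ) → ℝ) (q p : Fin 2 → ℝ) : ℝ :=
  ∑ i : Fin 2, (pderivQ F i q p * pderivP G i q p - pderivP F i q p * pderivQ G i q p)

/-- Relative volume `v(q) = exp((d₁q₁ + d₂q₂)/2)`. -/
noncomputable def vol (d1 d2 : ℕ) (q : Fin 2 → ℝ) : ℝ :=
  Real.exp (((d1 : ℝ) * q 0 + (d2 : ℝ) * q 1) / 2)

/-- The quadratic form `J(p) = (p₁+p₂)²/(n−1) − p₁²/d₁ − p₂²/d₂`, `n = d₁+d₂`. -/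
noncomputable def Jform (d1 d2 : ℕ) (p : Fin 2 → ℝ) : ℝ :=
  (1 / ((d1 : ℝ) + (d2 : ℝ) - 1)) * (p 0 + p 1) ^ 2 - (p 0) ^ 2 / (d1 : ℝ) -
    (p 1) ^ 2 / (d2 : ℝ)

/-- The Ricci-flat cohomogeneity one Hamiltonian `H(q,p) = v(q)⁻¹ J(p) − S(q) v(q)`. -/
noncomputable def Ham (d1 d2 : ℕ) (S : (Fin 2 → ℝ) → ℝ) (q p : Fin 2 → ℝ) : ℝ :=
  (vol d1 d2 q)⁻¹ * Jform d1 d2 p - S q * vol d1 d2 q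

/-!
On the zero level of `H` one may replace `H` by `v · H = J(p) - S v²`, whose potential `S v²` is a
sum `U` of two exponentials. The kinetic form `J` is indefinite, so in null coordinates it becomes
`p₁p₂`. Vanishing of the bracket with a quadratic `a p₁² + b p₂² + h p₁p₂ + α p₁ + β p₂ + γ` on the
hyperbolas `p₁p₂ = U` forces `a`, `α` to depend on `q₁` only and `b`, `β` on `q₂` only, gives one
linear equation for `α`, `β` and `U`, and expresses the gradient of `γ + h U` through `a`, `b`
and `U`. Both the linear equation and the symmetry of mixed differences of `γ + h U` are
separated relations `∑ᵢ fᵢ(q₁) Mᵢ(q₂) = ∑ᵢ gᵢ(q₂) Nᵢ(q₁)` with exponential `Mᵢ`, `Nᵢ`; hence `f` and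
`g` are combinations of exponentials, and linear independence of exponentials leaves only
`a = b = α = β = 0` unless the exponents `θ₀`, `θ₁` of `U` are resonant. Then `γ + h U` is constant
and `F = h (p₁p₂ - U) + const`. For the Ricci-flat data the decisive condition
`J(θᵢ - 2θⱼ) ≠ 0` reads `4 dⱼ ≠ dᵢ (dⱼ - 1)`.
-/

section CoordGradient

open Matrix

variable {ι : Type*} [Fintype ι] [DecidableEq ι]

/-- The vector of partial derivatives of `f` at `q`, each one taken along a coordinate line as in
`pderivQ` and `pderivP`. -/
noncomputable def coordGradient (f : (ι → ℝ) → ℝ) (q : ι → ℝ) : ι → ℝ :=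
  fun i => deriv (fun t => f (Function.update q i t)) (q i)

lemma hasDerivAt_comp_update {f : (ι → ℝ) → ℝ} {q : ι → ℝ} (hf : DifferentiableAt ℝ f q) (i : ι) :
    HasDerivAt (fun t => f (Function.update q i t)) (coordGradient f q i) (q i) := by
  have hf' : DifferentiableAt ℝ f (Function.update q i (q i)) := by simpa using hf
  exact (hf'.comp (q i) (hasDerivAt_update q i (q i)).differentiableAt).hasDerivAt

lemma coordGradient_eq_fderiv {f : (ι → ℝ) → ℝ} {q : ι → ℝ} (hf : DifferentiableAt ℝ f q) :
    coordGradient f q = fun i => fderiv ℝ f q (Pi.single i 1) := by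
  funext i
  have hf' : HasFDerivAt f (fderiv ℝ f q) (Function.update q i (q i)) := by
    simpa using hf.hasFDerivAt
  exact (hf'.comp_hasDerivAt (q i) (hasDerivAt_update q i (q i))).deriv

lemma fderiv_apply_eq_dotProduct {f : (ι → ℝ) → ℝ} {q : ι → ℝ} (hf : DifferentiableAt ℝ f q)
    (v : ι → ℝ) : fderiv ℝ f q v = coordGradient f q ⬝ᵥ v := by
  conv_lhs => rw [pi_eq_sum_univ' v]
  simp only [map_sum, map_smul, coordGradient_eq_fderiv hf, dotProduct, smul_eq_mul, mul_comm]

lemma coordGradient_eq_of_fderiv {f : (ι → ℝ) → ℝ} {f' : (ι → ℝ) →L[ℝ] ℝ} {q g : ι → ℝ}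
    (hf : HasFDerivAt f f' q) (hg : ∀ v, f' v = g ⬝ᵥ v) : coordGradient f q = g := by
  funext i
  simp only [coordGradient_eq_fderiv hf.differentiableAt, hf.fderiv, hg, dotProduct_single_one]

lemma coordGradient_comp_mulVec {f : (ι → ℝ) → ℝ} (M : Matrix ι ι ℝ) {q : ι → ℝ}
    (hf : DifferentiableAt ℝ f (M *ᵥ q)) :
    coordGradient (fun q => f (M *ᵥ q)) q = coordGradient f (M *ᵥ q) ᵥ* M := by
  refine coordGradient_eq_of_fderiv
    (hf.hasFDerivAt.comp q (Matrix.mulVecLin M).toContinuousLinearMap.hasFDerivAt) fun v => ?_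
  simp [fderiv_apply_eq_dotProduct hf, dotProduct_mulVec]

lemma coordGradient_mul {f g : (ι → ℝ) → ℝ} {q : ι → ℝ} (hf : DifferentiableAt ℝ f q)
    (hg : DifferentiableAt ℝ g q) :
    coordGradient (fun q => f q * g q) q = f q • coordGradient g q + g q • coordGradient f q :=
  coordGradient_eq_of_fderiv (hf.hasFDerivAt.mul hg.hasFDerivAt) fun v => by
    simp [fderiv_apply_eq_dotProduct hf, fderiv_apply_eq_dotProduct hg, add_dotProduct]

lemma coordGradient_const_mul {f : (ι → ℝ) → ℝ} {q : ι → ℝ} (c : ℝ) (hf : DifferentiableAt ℝ f q) :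
    coordGradient (fun q => c * f q) q = c • coordGradient f q :=
  coordGradient_eq_of_fderiv (hf.hasFDerivAt.const_mul c) fun v => by
    simp [fderiv_apply_eq_dotProduct hf]

lemma coordGradient_add {f g : (ι → ℝ) → ℝ} {q : ι → ℝ} (hf : DifferentiableAt ℝ f q)
    (hg : DifferentiableAt ℝ g q) :
    coordGradient (fun q => f q + g q) q = coordGradient f q + coordGradient g q :=
  coordGradient_eq_of_fderiv (hf.hasFDerivAt.add hg.hasFDerivAt) fun v => by
    simp [fderiv_apply_eq_dotProduct hf, fderiv_apply_eq_dotProduct hg, add_dotProduct]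

lemma coordGradient_comp_apply {f : ℝ → ℝ} {i : ι} {q : ι → ℝ} (hf : DifferentiableAt ℝ f (q i)) :
    coordGradient (fun q => f (q i)) q = Pi.single i (deriv f (q i)) :=
  coordGradient_eq_of_fderiv (hf.hasDerivAt.comp_hasFDerivAt q (hasFDerivAt_apply i q))
    fun v => by simp

lemma eq_of_coordGradient_eq_zero {f : (ι → ℝ) → ℝ} (hf : Differentiable ℝ f)
    (h : ∀ q, coordGradient f q = 0) (q q' : ι → ℝ) : f q = f q' :=
  is_const_of_fderiv_eq_zero hf
    (fun x => ContinuousLinearMap.ext fun v => by simp [fderiv_apply_eq_dotProduct (hf x), h]) q q'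

lemma exists_eq_comp_apply_of_coordGradient_eq_zero {f : (ι → ℝ) → ℝ} (hf : Differentiable ℝ f)
    {i : ι} (h : ∀ q, ∀ j ≠ i, coordGradient f q j = 0) :
    ∃ g : ℝ → ℝ, Differentiable ℝ g ∧ f = fun q => g (q i) := by
  refine ⟨fun t => f (t • Pi.single i 1), by fun_prop, funext fun q => ?_⟩
  set v := q - q i • Pi.single i 1 with hv
  have hline : ∀ s : ℝ, HasDerivAt (fun s : ℝ => f (q i • Pi.single i 1 + s • v)) 0 s := by
    intro s
    have hd := (hf _).hasFDerivAt.comp_hasDerivAt s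
      (((hasDerivAt_id s).smul_const v).const_add (q i • Pi.single i 1))
    refine hd.congr_deriv ?_
    rw [one_smul, fderiv_apply_eq_dotProduct (hf _)]
    refine Finset.sum_eq_zero fun j _ => ?_
    obtain rfl | hj := eq_or_ne j i
    · simp [hv]
    · simp [h _ j hj]
  simpa [hv] using is_const_of_deriv_eq_zero (fun s => (hline s).differentiableAt)
    (fun s => (hline s).deriv) 1 0

end CoordGradient

section Poisson

open Matrix

variable {F K : (Fin 2 → ℝ) → (Fin 2 → ℝ) → ℝ}

lemma poisson_eq_dotProduct (F G : (Fin 2 → ℝ) → (Fin 2 → ℝ) → ℝ) (q p : Fin 2 → ℝ) :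
    poisson F G q p =
      coordGradient (fun q => F q p) q ⬝ᵥ coordGradient (G q) p -
        coordGradient (F q) p ⬝ᵥ coordGradient (fun q => G q p) q := by
  simp only [poisson, Finset.sum_sub_distrib]
  rfl

lemma poisson_comp_linear {G : (Fin 2 → ℝ) → (Fin 2 → ℝ) → ℝ}
    (hFq : ∀ p, Differentiable ℝ fun q => F q p) (hFp : ∀ q, Differentiable ℝ (F q))
    (hGq : ∀ p, Differentiable ℝ fun q => G q p) (hGp : ∀ q, Differentiable ℝ (G q))
    {M : Matrix (Fin 2) (Fin 2) ℝ} (hM : IsUnit M.det) (q p : Fin 2 → ℝ) :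
    poisson (fun q p => F (M *ᵥ q) (p ᵥ* M⁻¹)) (fun q p => G (M *ᵥ q) (p ᵥ* M⁻¹)) q p =
      poisson F G (M *ᵥ q) (p ᵥ* M⁻¹) := by
  simp only [poisson_eq_dotProduct, ← mulVec_transpose M⁻¹]
  rw [coordGradient_comp_mulVec M (hFq _ _), coordGradient_comp_mulVec M (hGq _ _),
    coordGradient_comp_mulVec _ (hFp _ _), coordGradient_comp_mulVec _ (hGp _ _)]
  simp only [vecMul_transpose, ← dotProduct_mulVec, mulVec_mulVec, mul_nonsing_inv M hM,
    one_mulVec, dotProduct_comm (M⁻¹ *ᵥ _)]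
  simp only [dotProduct_comm]

lemma poisson_mul_of_eq_zero {g : (Fin 2 → ℝ) → ℝ} {q p : Fin 2 → ℝ}
    (hg : DifferentiableAt ℝ g q) (hKq : DifferentiableAt ℝ (fun q => K q p) q)
    (hKp : DifferentiableAt ℝ (K q) p) (hK : K q p = 0) :
    poisson F (fun q p => g q * K q p) q p = g q * poisson F K q p := by
  have hp : coordGradient (fun p => g q * K q p) p = g q • coordGradient (K q) p :=
    coordGradient_const_mul (g q) hKp
  rw [poisson_eq_dotProduct, poisson_eq_dotProduct, hp, coordGradient_mul hg hKq, hK, zero_smul,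
    add_zero, dotProduct_smul, dotProduct_smul, smul_eq_mul, smul_eq_mul, mul_sub]

/-- A conformal change of the Hamiltonian reparametrizes its flow on the zero level, hence has the
same first integrals there. -/
lemma poisson_eq_zero_of_mul {g : (Fin 2 → ℝ) → ℝ} (hg : Differentiable ℝ g) (hg0 : ∀ q, g q ≠ 0)
    (hKq : ∀ p, Differentiable ℝ fun q => K q p) (hKp : ∀ q, Differentiable ℝ (K q))
    (h : ∀ q p, g q * K q p = 0 → poisson F (fun q p => g q * K q p) q p = 0) (q p : Fin 2 → ℝ)
    (hK : K q p = 0) : poisson F K q p = 0 := by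
  have h0 := h q p (mul_eq_zero_of_right _ hK)
  rw [poisson_mul_of_eq_zero (hg q) (hKq p q) (hKp q p) hK] at h0
  exact (mul_eq_zero.mp h0).resolve_left (hg0 q)

/-- The polynomial `a p₁² + b p₂² + h p₁p₂ + α p₁ + β p₂ + γ` in the momenta. -/
def momentumQuadratic (a b h α β γ : (Fin 2 → ℝ) → ℝ) (q p : Fin 2 → ℝ) : ℝ :=
  a q * p 0 ^ 2 + b q * p 1 ^ 2 + h q * p 0 * p 1 + α q * p 0 + β q * p 1 + γ q

/-- `F` is a polynomial of degree at most two in the momenta, with differentiable coefficients. -/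
def IsMomentumQuadratic (F : (Fin 2 → ℝ) → (Fin 2 → ℝ) → ℝ) : Prop :=
  ∃ a b h α β γ : (Fin 2 → ℝ) → ℝ, Differentiable ℝ a ∧ Differentiable ℝ b ∧
    Differentiable ℝ h ∧ Differentiable ℝ α ∧ Differentiable ℝ β ∧ Differentiable ℝ γ ∧
    F = momentumQuadratic a b h α β γ

lemma IsMomentumQuadratic.differentiable_left (hF : IsMomentumQuadratic F) (p : Fin 2 → ℝ) :
    Differentiable ℝ fun q => F q p := by
  obtain ⟨a, b, h, α, β, γ, ha, hb, hh, hα, hβ, hγ, rfl⟩ := hF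
  unfold momentumQuadratic
  fun_prop

lemma IsMomentumQuadratic.differentiable_right (hF : IsMomentumQuadratic F) (q : Fin 2 → ℝ) :
    Differentiable ℝ (F q) := by
  obtain ⟨a, b, h, α, β, γ, -, -, -, -, -, -, rfl⟩ := hF
  unfold momentumQuadratic
  fun_prop

lemma IsMomentumQuadratic.comp_linear (hF : IsMomentumQuadratic F)
    (M N : Matrix (Fin 2) (Fin 2) ℝ) :
    IsMomentumQuadratic fun q p => F (M *ᵥ q) (p ᵥ* N) := by
  obtain ⟨a, b, h, α, β, γ, ha, hb, hh, hα, hβ, hγ, rfl⟩ := hF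
  have hM : Differentiable ℝ fun q => M *ᵥ q :=
    (Matrix.mulVecLin M).toContinuousLinearMap.differentiable
  refine ⟨fun q => N 0 0 ^ 2 * a (M *ᵥ q) + N 0 1 ^ 2 * b (M *ᵥ q) + N 0 0 * N 0 1 * h (M *ᵥ q),
    fun q => N 1 0 ^ 2 * a (M *ᵥ q) + N 1 1 ^ 2 * b (M *ᵥ q) + N 1 0 * N 1 1 * h (M *ᵥ q),
    fun q => 2 * N 0 0 * N 1 0 * a (M *ᵥ q) + 2 * N 0 1 * N 1 1 * b (M *ᵥ q) +
      (N 0 0 * N 1 1 + N 0 1 * N 1 0) * h (M *ᵥ q),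
    fun q => N 0 0 * α (M *ᵥ q) + N 0 1 * β (M *ᵥ q),
    fun q => N 1 0 * α (M *ᵥ q) + N 1 1 * β (M *ᵥ q),
    fun q => γ (M *ᵥ q), by fun_prop, by fun_prop, by fun_prop, by fun_prop, by fun_prop,
    by fun_prop, ?_⟩
  funext q p
  simp only [momentumQuadratic, vecMul, dotProduct, Fin.sum_univ_two]
  ring

section Null

variable {a b h α β γ U : (Fin 2 → ℝ) → ℝ}

lemma coordGradient_momentumQuadratic_left (ha : Differentiable ℝ a) (hb : Differentiable ℝ b)
    (hh : Differentiable ℝ h) (hα : Differentiable ℝ α) (hβ : Differentiable ℝ β)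
    (hγ : Differentiable ℝ γ) (q p : Fin 2 → ℝ) (i : Fin 2) :
    coordGradient (fun q => momentumQuadratic a b h α β γ q p) q i =
      momentumQuadratic (coordGradient a · i) (coordGradient b · i) (coordGradient h · i)
        (coordGradient α · i) (coordGradient β · i) (coordGradient γ · i) q p :=
  (((((((hasDerivAt_comp_update (ha q) i).mul_const _).add
    ((hasDerivAt_comp_update (hb q) i).mul_const _)).add
    (((hasDerivAt_comp_update (hh q) i).mul_const _).mul_const _)).add
    ((hasDerivAt_comp_update (hα q) i).mul_const _)).add
    ((hasDerivAt_comp_update (hβ q) i).mul_const _)).add (hasDerivAt_comp_update (hγ q) i)).deriv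

lemma coordGradient_momentumQuadratic_right (a b h α β γ : (Fin 2 → ℝ) → ℝ) (q p : Fin 2 → ℝ) :
    coordGradient (momentumQuadratic a b h α β γ q) p =
      ![2 * a q * p 0 + h q * p 1 + α q, 2 * b q * p 1 + h q * p 0 + β q] := by
  have hx : HasFDerivAt (fun p : Fin 2 → ℝ => p 0) (.proj (R := ℝ) 0) p := hasFDerivAt_apply 0 p
  have hy : HasFDerivAt (fun p : Fin 2 → ℝ => p 1) (.proj (R := ℝ) 1) p := hasFDerivAt_apply 1 p
  refine coordGradient_eq_of_fderiv (((((((hx.pow 2).const_mul (a q)).add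
    ((hy.pow 2).const_mul (b q))).add ((hx.const_mul (h q)).mul hy)).add
    (hx.const_mul (α q))).add (hy.const_mul (β q))).add_const (γ q)) fun v => ?_
  simp only [_root_.add_apply, _root_.smul_apply, ContinuousLinearMap.proj_apply, smul_eq_mul,
    nsmul_eq_mul, pow_one, Nat.add_one_sub_one, Nat.cast_ofNat, dotProduct,
    Fin.sum_univ_two, cons_val_zero, cons_val_one]
  ring

/-- The natural Hamiltonian `J(p) - U(q)` with kinetic form `J` and potential `-U`. -/
def naturalHam (J U : (Fin 2 → ℝ) → ℝ) (q p : Fin 2 → ℝ) : ℝ := J p - U q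

/-- The quadratic form `p₁p₂`, to which every indefinite form reduces in null coordinates. -/
def nullForm (p : Fin 2 → ℝ) : ℝ := p 0 * p 1

lemma polar_nullForm (p p' : Fin 2 → ℝ) :
    QuadraticMap.polar nullForm p p' = p 0 * p' 1 + p' 0 * p 1 := by
  simp only [QuadraticMap.polar, nullForm, Pi.add_apply]
  ring

lemma poisson_momentumQuadratic_null (ha : Differentiable ℝ a) (hb : Differentiable ℝ b)
    (hh : Differentiable ℝ h) (hα : Differentiable ℝ α) (hβ : Differentiable ℝ β)
    (hγ : Differentiable ℝ γ) (hU : Differentiable ℝ U) (q p : Fin 2 → ℝ) :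
    poisson (momentumQuadratic a b h α β γ) (naturalHam nullForm U) q p =
      momentumQuadratic (coordGradient a · 0) (coordGradient b · 0) (coordGradient h · 0)
        (coordGradient α · 0) (coordGradient β · 0) (coordGradient γ · 0) q p * p 1 +
      momentumQuadratic (coordGradient a · 1) (coordGradient b · 1) (coordGradient h · 1)
        (coordGradient α · 1) (coordGradient β · 1) (coordGradient γ · 1) q p * p 0 +
      (2 * a q * p 0 + h q * p 1 + α q) * coordGradient U q 0 +
      (2 * b q * p 1 + h q * p 0 + β q) * coordGradient U q 1 := by
  have hp : coordGradient (naturalHam nullForm U q) p = ![p 1, p 0] := by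
    funext i
    fin_cases i <;> simp [coordGradient, naturalHam, nullForm]
  have hq : coordGradient (fun q => naturalHam nullForm U q p) q = -coordGradient U q :=
    coordGradient_eq_of_fderiv ((hU q).hasFDerivAt.const_sub _) fun v => by
      simp [fderiv_apply_eq_dotProduct (hU q)]
  rw [poisson_eq_dotProduct, hp, hq, coordGradient_momentumQuadratic_right]
  simp only [dotProduct, Fin.sum_univ_two, Pi.neg_apply, cons_val_zero, cons_val_one,
    coordGradient_momentumQuadratic_left ha hb hh hα hβ hγ]
  ring

end Null

end Poisson

section Exponentials

open Matrix

lemma exp_coeff_eq_zero {ι : Type*} [Fintype ι] {x : ι → ℝ} (hx : Function.Injective x)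
    {c : ι → ℝ} (h : ∀ t : ℝ, ∑ i, c i * Real.exp (x i * t) = 0) : c = 0 := by
  let e : ι → (Multiplicative ℝ →* ℝ) := fun i =>
    { toFun := fun t => Real.exp (x i * t.toAdd)
      map_one' := by simp
      map_mul' := fun s t => by simp [mul_add, Real.exp_add] }
  have he : Function.Injective e := fun i j hij =>
    hx (by simpa [e] using DFunLike.congr_fun hij (Multiplicative.ofAdd 1))
  have hli := Fintype.linearIndependent_iff.mp
    ((linearIndependent_monoidHom (Multiplicative ℝ) ℝ).comp e he)
  exact funext (hli c (funext fun t => by simpa [e, Finset.sum_apply] using h t.toAdd))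

lemma hasDerivAt_exp_const_mul (κ t : ℝ) :
    HasDerivAt (fun t => Real.exp (κ * t)) (κ * Real.exp (κ * t)) t := by
  simpa [mul_comm] using ((hasDerivAt_id t).const_mul κ).exp

/-- The vector `(e^{lᵢ t})ᵢ` of real exponentials with rates `lᵢ`. -/
noncomputable def expVec {ι : Type*} (l : ι → ℝ) (t : ℝ) : ι → ℝ := fun i => Real.exp (l i * t)

lemma sub_zero_eq_of_hasDerivAt_dotProduct_expVec {ι : Type*} [Fintype ι] {l c : ι → ℝ}
    (hl : ∀ i, l i ≠ 0) {z : ℝ → ℝ} (hz : ∀ t, HasDerivAt z (c ⬝ᵥ expVec l t) t) (t : ℝ) :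
    z t - z 0 = (fun i => c i / l i) ⬝ᵥ (expVec l t - 1) := by
  have hE : ∀ s, HasDerivAt (fun t => ∑ i, c i / l i * Real.exp (l i * t))
      (c ⬝ᵥ expVec l s) s := fun s => by
    refine (HasDerivAt.fun_sum fun i _ =>
      (hasDerivAt_exp_const_mul (l i) s).const_mul (c i / l i)).congr_deriv ?_
    refine Finset.sum_congr rfl fun i _ => ?_
    rw [← mul_assoc, div_mul_cancel₀ _ (hl i)]
    rfl
  have hd : ∀ s, HasDerivAt (fun t => z t - ∑ i, c i / l i * Real.exp (l i * t)) 0 s :=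
    fun s => ((hz s).sub (hE s)).congr_deriv (sub_self _)
  have hconst := is_const_of_deriv_eq_zero (fun s => (hd s).differentiableAt)
    (fun s => (hd s).deriv) t 0
  simp only [mul_zero, Real.exp_zero, mul_one] at hconst
  simp only [dotProduct, expVec, Pi.sub_apply, Pi.one_apply, mul_sub, mul_one,
    Finset.sum_sub_distrib]
  linear_combination hconst

/-- The two sides are the mixed second difference of `Z`. -/
lemma dotProduct_expVec_sub_one_comm {ι : Type*} [Fintype ι] {l m : ι → ℝ} (hl : ∀ i, l i ≠ 0)
    (hm : ∀ i, m i ≠ 0) {f g : ℝ → ι → ℝ} {Z : ℝ → ℝ → ℝ}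
    (hZu : ∀ u w, HasDerivAt (fun u => Z u w) (g w ⬝ᵥ expVec l u) u)
    (hZw : ∀ u w, HasDerivAt (Z u) (f u ⬝ᵥ expVec m w) w) (u w : ℝ) :
    (fun i => (f u i - f 0 i) / m i) ⬝ᵥ (expVec m w - 1) =
      (fun i => (g w i - g 0 i) / l i) ⬝ᵥ (expVec l u - 1) := by
  have hu := fun w => sub_zero_eq_of_hasDerivAt_dotProduct_expVec hl (fun t => hZu t w) u
  have hw := fun u => sub_zero_eq_of_hasDerivAt_dotProduct_expVec hm (hZw u) w
  have hsub : ∀ {x y k v : ι → ℝ}, (fun i => (x i - y i) / k i) ⬝ᵥ v =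
      (fun i => x i / k i) ⬝ᵥ v - (fun i => y i / k i) ⬝ᵥ v := fun {x y k v} => by
    simp only [dotProduct, sub_div, sub_mul, Finset.sum_sub_distrib]
  rw [hsub, hsub, ← hu, ← hu, ← hw, ← hw]
  ring

lemma exists_bilinear_of_separated {R X Y ι κ : Type*} [CommRing R] [Fintype ι] [DecidableEq ι]
    [Fintype κ] [DecidableEq κ] {f : X → ι → R} {g : Y → κ → R} {N : X → κ → R} {M : Y → ι → R}
    (h : ∀ x y, f x ⬝ᵥ M y = g y ⬝ᵥ N x) {x : κ → X} {y : ι → Y}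
    (hN : IsUnit (Matrix.of fun j => N (x j)).det) (hM : IsUnit (Matrix.of fun i => M (y i)).det) :
    ∃ K : Matrix ι κ R, (∀ x, f x = K *ᵥ N x) ∧ ∀ y, g y = Kᵀ *ᵥ M y := by
  set P : Matrix ι ι R := Matrix.of fun i => M (y i)
  set Q : Matrix κ κ R := Matrix.of fun j => N (x j)
  have hf : ∀ x, f x = (P⁻¹ * Matrix.of fun i => g (y i)) *ᵥ N x := fun x => by
    have hP : P *ᵥ f x = (Matrix.of fun i => g (y i)) *ᵥ N x :=
      funext fun i => (dotProduct_comm _ _).trans (h x (y i))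
    rw [← mulVec_mulVec, ← hP, mulVec_mulVec, nonsing_inv_mul _ hM, one_mulVec]
  refine ⟨_, hf, fun z => mulVec_injective_of_isUnit ((isUnit_iff_isUnit_det Q).mpr hN) ?_⟩
  funext j
  calc (Q *ᵥ g z) j = f (x j) ⬝ᵥ M z := (dotProduct_comm _ _).trans (h (x j) z).symm
    _ = _ := by
      rw [hf, dotProduct_comm, dotProduct_mulVec, ← mulVec_transpose, dotProduct_comm]
      rfl

/-- The rates `-l₀, -l₁, 0, l₁ - l₀, l₀ - l₁` are pairwise distinct. -/
structure NonresonantPair (l : Fin 2 → ℝ) : Prop where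
  ne_zero : ∀ i, l i ≠ 0
  ne : ∀ i j, i ≠ j → l i ≠ l j
  ne_two_mul : ∀ i j, i ≠ j → l i ≠ 2 * l j

lemma NonresonantPair.injective_rates {l : Fin 2 → ℝ} (hl : NonresonantPair l) :
    Function.Injective ![-l 0, -l 1, 0, l 1 - l 0, l 0 - l 1] := by
  obtain ⟨h, h', h''⟩ := hl
  simp only [Fin.forall_fin_two] at h h' h''
  intro i j hij
  fin_cases i <;> fin_cases j <;> simp at hij ⊢ <;> grind

lemma NonresonantPair.isUnit_det_expVec {l : Fin 2 → ℝ} (hl : NonresonantPair l) :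
    IsUnit (Matrix.of fun j => expVec l (![0, 1] j)).det := by
  have h := hl.ne 1 0 (by decide)
  simpa [det_fin_two, expVec, sub_eq_zero] using h

lemma NonresonantPair.isUnit_det_expVec_sub_one {l : Fin 2 → ℝ} (hl : NonresonantPair l) :
    IsUnit (Matrix.of fun j => expVec l (![1, 2] j) - 1).det := by
  have h2 : ∀ z : ℝ, Real.exp (z * 2) = Real.exp z ^ 2 := fun z => by
    rw [← Real.exp_nat_mul, mul_comm]; rfl
  have hdet : (Matrix.of fun j => expVec l (![1, 2] j) - 1).det =
      (Real.exp (l 0) - 1) * (Real.exp (l 1) - 1) * (Real.exp (l 1) - Real.exp (l 0)) := by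
    simp only [det_fin_two, of_apply, cons_val_zero, cons_val_one, Pi.sub_apply, Pi.one_apply,
      expVec, mul_one, h2]
    ring
  simp [hdet, sub_eq_zero, hl.ne_zero, hl.ne 1 0 (by decide)]

lemma mul_eq_of_mul_mul_exp_eq {l k : Fin 2 → ℝ} {K : Matrix (Fin 2) (Fin 2) ℝ} {z u : ℝ}
    {i j : Fin 2} (hij : i ≠ j) (h : z * Real.exp (l i * u) = k i + (K *ᵥ expVec l u) i) :
    z = k i * Real.exp (-l i * u) + K i i + K i j * Real.exp ((l j - l i) * u) := by
  have hsum : (K *ᵥ expVec l u) i = K i i * Real.exp (l i * u) + K i j * Real.exp (l j * u) := by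
    fin_cases i <;> fin_cases j <;>
      simp [mulVec, dotProduct, Fin.sum_univ_two, expVec, add_comm] at hij ⊢
  rw [hsum] at h
  rw [sub_mul, Real.exp_sub, neg_mul, Real.exp_neg]
  have hne := Real.exp_ne_zero (l i * u)
  generalize Real.exp (l i * u) = X at h hne ⊢
  field_simp
  linear_combination h

namespace NonresonantPair

variable {A l : Fin 2 → ℝ} {r : ℝ} {f f' : ℝ → ℝ}

/-- Eliminating `f'` expresses `f` through exponentials; differentiating that expression and
comparing coefficients gives the compatibility conditions. -/
lemma coeff_eq_zero (hl : NonresonantPair l) (hr : r ≠ 0) (hf : ∀ u, HasDerivAt f (f' u) u)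
    {k : Fin 2 → ℝ} {K : Matrix (Fin 2) (Fin 2) ℝ} (hA : ∀ i, A i ≠ 0)
    (h : ∀ i u, A i * (f' u + r * l i * f u) * Real.exp (l i * u) =
      k i + (K *ᵥ expVec l u) i) :
    (∀ i j, i ≠ j → k i * (r * l j - l i) = 0) ∧
      (∀ i j, i ≠ j → K i j * ((r + 1) * l j - l i) = 0) ∧
      l 0 * A 0 * K 1 1 = l 1 * A 1 * K 0 0 := by
  have e0 := fun u => mul_eq_of_mul_mul_exp_eq (j := 1) (by decide) (h 0 u)
  have e1 := fun u => mul_eq_of_mul_mul_exp_eq (j := 0) (by decide) (h 1 u)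
  have hrel : ∀ u, A 1 * (k 0 * (r * l 1 - l 0)) * Real.exp (-l 0 * u)
      - A 0 * (k 1 * (r * l 0 - l 1)) * Real.exp (-l 1 * u)
      + r * (l 1 * A 1 * K 0 0 - l 0 * A 0 * K 1 1)
      + A 1 * (K 0 1 * ((r + 1) * l 1 - l 0)) * Real.exp ((l 1 - l 0) * u)
      - A 0 * (K 1 0 * ((r + 1) * l 0 - l 1)) * Real.exp ((l 0 - l 1) * u) = 0 := by
    intro u
    have hd0 := ((((hasDerivAt_exp_const_mul (-l 0) u).const_mul (k 0)).add_const (K 0 0)).add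
      ((hasDerivAt_exp_const_mul (l 1 - l 0) u).const_mul (K 0 1))).const_mul (A 1)
    have hd1 := ((((hasDerivAt_exp_const_mul (-l 1) u).const_mul (k 1)).add_const (K 1 1)).add
      ((hasDerivAt_exp_const_mul (l 0 - l 1) u).const_mul (K 1 0))).const_mul (A 0)
    have hdf := (hf u).const_mul (A 0 * A 1 * r * (l 1 - l 0))
    have heq := (hd1.sub hd0).unique (hdf.congr_of_eventuallyEq
      (Filter.Eventually.of_forall fun v => by
        simp only [Pi.sub_apply, Pi.add_apply]
        linear_combination A 1 * e0 v - A 0 * e1 v))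
    linear_combination -heq - A 1 * r * l 1 * e0 u + A 0 * r * l 0 * e1 u
  have hc := exp_coeff_eq_zero hl.injective_rates
    (c := ![A 1 * (k 0 * (r * l 1 - l 0)), -(A 0 * (k 1 * (r * l 0 - l 1))),
      r * (l 1 * A 1 * K 0 0 - l 0 * A 0 * K 1 1),
      A 1 * (K 0 1 * ((r + 1) * l 1 - l 0)), -(A 0 * (K 1 0 * ((r + 1) * l 0 - l 1)))])
    (fun u => by
      simp only [Fin.sum_univ_five, cons_val, zero_mul, Real.exp_zero]
      linear_combination hrel u)
  simp only [cons_eq_zero_iff, neg_eq_zero, mul_eq_zero, hA, hr, false_or] at hc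
  obtain ⟨hk0, hk1, hdiag, hK01, hK10, -⟩ := hc
  refine ⟨?_, ?_, by linear_combination -hdiag⟩ <;> simp [Fin.forall_fin_two, *]

lemma eq_zero_of_const (hl : NonresonantPair l) (hr : r ≠ 0)
    (hlr : ∀ i j, i ≠ j → r * l j ≠ l i) (hf : ∀ u, HasDerivAt f (f' u) u) {k : Fin 2 → ℝ}
    (hA : ∀ i, A i ≠ 0)
    (h : ∀ i u, A i * (f' u + r * l i * f u) * Real.exp (l i * u) = k i) (u : ℝ) : f u = 0 := by
  have hk := (hl.coeff_eq_zero hr hf hA (k := k) (K := 0) fun i u => by simpa using h i u).1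
  have hk0 : k 0 = 0 := by
    simpa [sub_eq_zero, hlr 0 1 (by decide)] using hk 0 1 (by decide)
  have hk1 : k 1 = 0 := by
    simpa [sub_eq_zero, hlr 1 0 (by decide)] using hk 1 0 (by decide)
  have h0 := h 0 u
  have h1 := h 1 u
  simp only [hk0, hk1, mul_eq_zero, Real.exp_ne_zero, or_false, hA, false_or] at h0 h1
  have hdiff : r * (l 0 - l 1) * f u = 0 := by linear_combination h0 - h1
  simpa [hr, sub_eq_zero, hl.ne 0 1 (by decide)] using hdiff

end NonresonantPair

lemma eq_zero_of_coupled_exp_system {A B l m : Fin 2 → ℝ} (hl : NonresonantPair l)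
    (hm : NonresonantPair m) {r : ℝ} (hr : r ≠ 0) (hlr : ∀ i j, i ≠ j → r * l j ≠ l i)
    (hmr : ∀ i j, i ≠ j → r * m j ≠ m i) {f f' g g' : ℝ → ℝ}
    (hf : ∀ u, HasDerivAt f (f' u) u) (hg : ∀ w, HasDerivAt g (g' w) w)
    (hA : ∀ i, A i ≠ 0) (hB : ∀ i, B i ≠ 0) {κ τ : Fin 2 → ℝ} {K : Matrix (Fin 2) (Fin 2) ℝ}
    (hfK : ∀ i u, A i * (f' u + r * l i * f u) * Real.exp (l i * u) =
      κ i + (K *ᵥ expVec l u) i)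
    (hgK : ∀ i w, B i * (g' w + r * m i * g w) * Real.exp (m i * w) =
      τ i + (Kᵀ *ᵥ expVec m w) i)
    (hoff : ∀ i j, i ≠ j → ¬(l i = (r + 1) * l j ∧ m j = (r + 1) * m i))
    (hdiag : l 0 * A 0 * (m 1 * B 1) ≠ l 1 * A 1 * (m 0 * B 0)) :
    (∀ u, f u = 0) ∧ ∀ w, g w = 0 := by
  obtain ⟨-, hfoff, hfdiag⟩ := hl.coeff_eq_zero hr hf hA hfK
  obtain ⟨-, hgoff, hgdiag⟩ := hm.coeff_eq_zero hr hg hB hgK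
  simp only [transpose_apply] at hgoff hgdiag
  have hKoff : ∀ i j, i ≠ j → K i j = 0 := by
    intro i j hij
    by_contra hK
    have h1 := (mul_eq_zero.mp (hfoff i j hij)).resolve_left hK
    have h2 := (mul_eq_zero.mp (hgoff j i hij.symm)).resolve_left hK
    exact hoff i j hij ⟨by linarith, by linarith⟩
  have hK0 : K 0 0 = 0 := by
    have : (l 0 * A 0 * (m 1 * B 1) - l 1 * A 1 * (m 0 * B 0)) * K 0 0 = 0 := by
      linear_combination m 0 * B 0 * hfdiag - l 0 * A 0 * hgdiag
    simpa [sub_ne_zero.mpr hdiag] using this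
  have hK1 : K 1 1 = 0 := by simpa [hK0, hl.ne_zero, hA] using hfdiag
  obtain rfl : K = 0 := by
    ext i j
    fin_cases i <;> fin_cases j <;> simp [hK0, hK1, hKoff]
  exact ⟨hl.eq_zero_of_const hr hlr hf hA (k := κ) fun i u => by simpa using hfK i u,
    hm.eq_zero_of_const hr hmr hg hB (k := τ) fun i w => by simpa using hgK i w⟩

end Exponentials

section NullCoordinates

open Matrix

lemma laurent_coeff_eq_zero {a₃ a₂ a₁ a₀ b₁ b₂ b₃ : ℝ}
    (h : ∀ t : ℝ, t ≠ 0 → a₃ * t ^ 3 + a₂ * t ^ 2 + a₁ * t + a₀ + b₁ * t⁻¹ + b₂ * t⁻¹ ^ 2 +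
      b₃ * t⁻¹ ^ 3 = 0) :
    a₃ = 0 ∧ a₂ = 0 ∧ a₁ = 0 ∧ a₀ = 0 := by
  have h1 := h 1 (by norm_num)
  have h2 := h (-1) (by norm_num)
  have h3 := h 2 (by norm_num)
  have h4 := h (-2) (by norm_num)
  have h5 := h 3 (by norm_num)
  have h6 := h (-3) (by norm_num)
  have h7 := h 4 (by norm_num)
  norm_num at h1 h2 h3 h4 h5 h6 h7
  refine ⟨?_, ?_, ?_, ?_⟩ <;> linarith

lemma cubic_coeff_eq_zero_of_hyperbola {a₃ a₂ a₁ a₀ b₁ b₂ b₃ c : ℝ}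
    (h : ∀ x y : ℝ, x * y = c → a₃ * x ^ 3 + a₂ * x ^ 2 + a₁ * x + a₀ + b₁ * y + b₂ * y ^ 2 +
      b₃ * y ^ 3 = 0) :
    a₃ = 0 ∧ a₂ = 0 ∧ a₁ = 0 ∧ a₀ = 0 ∧ b₁ = 0 ∧ b₂ = 0 ∧ b₃ = 0 := by
  obtain ⟨ha₃, ha₂, ha₁, ha₀⟩ := laurent_coeff_eq_zero (a₃ := a₃) (a₂ := a₂) (a₁ := a₁) (a₀ := a₀)
    (b₁ := b₁ * c) (b₂ := b₂ * c ^ 2) (b₃ := b₃ * c ^ 3) fun t ht => by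
      linear_combination h t (c * t⁻¹) (by field_simp)
  obtain ⟨hb₃, hb₂, hb₁, -⟩ := laurent_coeff_eq_zero (a₃ := b₃) (a₂ := b₂) (a₁ := b₁) (a₀ := a₀)
    (b₁ := a₁ * c) (b₂ := a₂ * c ^ 2) (b₃ := a₃ * c ^ 3) fun t ht => by
      linear_combination h (c * t⁻¹) t (by field_simp)
  exact ⟨ha₃, ha₂, ha₁, ha₀, hb₁, hb₂, hb₃⟩

lemma determining_equations {a b h α β γ U : (Fin 2 → ℝ) → ℝ} (ha : Differentiable ℝ a)
    (hb : Differentiable ℝ b) (hh : Differentiable ℝ h) (hα : Differentiable ℝ α)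
    (hβ : Differentiable ℝ β) (hγ : Differentiable ℝ γ) (hU : Differentiable ℝ U) {q : Fin 2 → ℝ}
    (hF : ∀ p, naturalHam nullForm U q p = 0 →
      poisson (momentumQuadratic a b h α β γ) (naturalHam nullForm U) q p = 0) :
    coordGradient a q 1 = 0 ∧ coordGradient α q 1 = 0 ∧
      (coordGradient a q 0 + coordGradient h q 1) * U q + coordGradient γ q 1 +
        2 * a q * coordGradient U q 0 + h q * coordGradient U q 1 = 0 ∧
      (coordGradient α q 0 + coordGradient β q 1) * U q + α q * coordGradient U q 0 +
        β q * coordGradient U q 1 = 0 ∧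
      (coordGradient b q 1 + coordGradient h q 0) * U q + coordGradient γ q 0 +
        2 * b q * coordGradient U q 1 + h q * coordGradient U q 0 = 0 ∧
      coordGradient β q 0 = 0 ∧ coordGradient b q 0 = 0 := by
  refine cubic_coeff_eq_zero_of_hyperbola (c := U q) fun x y hxy => ?_
  have hxy' := hF ![x, y] (by simp [naturalHam, nullForm, hxy])
  simp only [poisson_momentumQuadratic_null ha hb hh hα hβ hγ hU, momentumQuadratic,
    cons_val_zero, cons_val_one] at hxy'
  rw [← hxy]
  linear_combination hxy'

/-- The potential `∑ᵢ Aᵢ e^{⟨θᵢ, q⟩}`, where `θᵢ` is the `i`-th row of `θ`. -/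
noncomputable def expPotential (A : Fin 2 → ℝ) (θ : Matrix (Fin 2) (Fin 2) ℝ) (q : Fin 2 → ℝ) : ℝ :=
  ∑ i, A i * Real.exp (θ i ⬝ᵥ q)

lemma expPotential_mulVec (A : Fin 2 → ℝ) (θ M : Matrix (Fin 2) (Fin 2) ℝ) (q : Fin 2 → ℝ) :
    expPotential A θ (M *ᵥ q) = expPotential A (θ * M) q := by
  simp only [expPotential, mul_apply_eq_vecMul, dotProduct_mulVec]

lemma differentiable_expPotential (A : Fin 2 → ℝ) (θ : Matrix (Fin 2) (Fin 2) ℝ) :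
    Differentiable ℝ (expPotential A θ) := by
  unfold expPotential dotProduct
  fun_prop

lemma coordGradient_expPotential (A : Fin 2 → ℝ) (θ : Matrix (Fin 2) (Fin 2) ℝ) (q : Fin 2 → ℝ) :
    coordGradient (expPotential A θ) q = ∑ i, (A i * Real.exp (θ i ⬝ᵥ q)) • θ i := by
  refine coordGradient_eq_of_fderiv (HasFDerivAt.fun_sum fun i _ => (HasFDerivAt.exp
    (dotProductBilin ℝ ℝ (θ i)).toContinuousLinearMap.hasFDerivAt).const_mul (A i)) fun v => ?_
  simp [mul_assoc]

/-- The conditions on the kinetic form `J` and the exponents `θ₀`, `θ₁` (the rows of `θ`) under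
which `J(p) - A₀ e^{⟨θ₀, q⟩} - A₁ e^{⟨θ₁, q⟩}` has no nontrivial quadratic first integrals on its
zero level. -/
structure Nonresonant (J : (Fin 2 → ℝ) → ℝ) (θ : Matrix (Fin 2) (Fin 2) ℝ) : Prop where
  det_ne_zero : θ.det ≠ 0
  apply_ne_zero : ∀ i, J (θ i) ≠ 0
  polar_ne_zero : QuadraticMap.polar J (θ 0) (θ 1) ≠ 0
  apply_sub_ne_zero : ∀ i j, i ≠ j → J (θ i - θ j) ≠ 0
  apply_sub_two_smul_ne_zero : ∀ i j, i ≠ j → J (θ i - 2 • θ j) ≠ 0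
  apply_sub_three_smul_ne_zero : ∀ i j, i ≠ j → ¬(J (θ i - 3 • θ j) = 0 ∧ J (θ j - 3 • θ i) = 0)

namespace Nonresonant

lemma comp_vecMul {J : (Fin 2 → ℝ) → ℝ} {θ M : Matrix (Fin 2) (Fin 2) ℝ} (hM : M.det ≠ 0)
    (h : Nonresonant (fun p => J (p ᵥ* M)) θ) : Nonresonant J (θ * M) where
  det_ne_zero := by simpa [det_mul, hM] using h.det_ne_zero
  apply_ne_zero := by simpa only [mul_apply_eq_vecMul] using h.apply_ne_zero
  polar_ne_zero := by
    simpa only [QuadraticMap.polar, mul_apply_eq_vecMul, add_vecMul] using h.polar_ne_zero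
  apply_sub_ne_zero := by simpa only [mul_apply_eq_vecMul, sub_vecMul] using h.apply_sub_ne_zero
  apply_sub_two_smul_ne_zero := by
    simpa only [mul_apply_eq_vecMul, sub_vecMul, smul_vecMul] using h.apply_sub_two_smul_ne_zero
  apply_sub_three_smul_ne_zero := by
    simpa only [mul_apply_eq_vecMul, sub_vecMul, smul_vecMul] using h.apply_sub_three_smul_ne_zero

variable {A : Fin 2 → ℝ} {θ : Matrix (Fin 2) (Fin 2) ℝ}

lemma nonresonantPair (h : Nonresonant nullForm θ) (k : Fin 2) :
    NonresonantPair fun i => θ i k := by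
  have hk : ∀ p, nullForm p ≠ 0 → p k ≠ 0 := fun p hp => by
    unfold nullForm at hp
    fin_cases k <;> simp_all
  exact ⟨fun i => hk _ (h.apply_ne_zero i),
    fun i j hij => sub_ne_zero.mp (hk _ (h.apply_sub_ne_zero i j hij)),
    fun i j hij => by simpa [sub_ne_zero] using hk _ (h.apply_sub_two_smul_ne_zero i j hij)⟩

lemma linear_part_eq_zero (h : Nonresonant nullForm θ) (hA : ∀ i, A i ≠ 0) {α α' β β' : ℝ → ℝ}
    (hα : ∀ u, HasDerivAt α (α' u) u) (hβ : ∀ w, HasDerivAt β (β' w) w)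
    (hE : ∀ u w, ∑ i, A i * ((α' u + θ i 0 * α u) + (β' w + θ i 1 * β w)) *
      (Real.exp (θ i 0 * u) * Real.exp (θ i 1 * w)) = 0) :
    (∀ u, α u = 0) ∧ ∀ w, β w = 0 := by
  obtain ⟨K, hfK, hgK⟩ := exists_bilinear_of_separated
    (f := fun u i => A i * (α' u + 1 * θ i 0 * α u) * Real.exp (θ i 0 * u))
    (g := fun w i => -A i * (β' w + 1 * θ i 1 * β w) * Real.exp (θ i 1 * w))
    (fun u w => by
      have := hE u w
      simp only [dotProduct, expVec, Fin.sum_univ_two] at this ⊢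
      linear_combination this)
    (h.nonresonantPair 0).isUnit_det_expVec (h.nonresonantPair 1).isUnit_det_expVec
  refine eq_zero_of_coupled_exp_system (h.nonresonantPair 0) (h.nonresonantPair 1) one_ne_zero
    (fun i j hij => ?_) (fun i j hij => ?_) hα hβ hA (fun i => neg_ne_zero.mpr (hA i))
    (κ := 0) (τ := 0) (K := K) (fun i u => ?_) (fun i w => ?_) (fun i j hij hres => ?_) ?_
  · simpa using (h.nonresonantPair 0).ne j i hij.symm
  · simpa using (h.nonresonantPair 1).ne j i hij.symm
  · simpa using congrFun (hfK u) i
  · simpa using congrFun (hgK w) i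
  · exact (h.nonresonantPair 0).ne_two_mul i j hij (by linarith [hres.1])
  · intro hdiag
    have : A 0 * A 1 * θ.det = 0 := by rw [det_fin_two]; linear_combination -hdiag
    simp [hA, h.det_ne_zero] at this

lemma quadratic_part_eq_zero (h : Nonresonant nullForm θ) (hA : ∀ i, A i ≠ 0) {a a' b b' : ℝ → ℝ}
    {Z : ℝ → ℝ → ℝ} (ha : ∀ u, HasDerivAt a (a' u) u) (hb : ∀ w, HasDerivAt b (b' w) w)
    (hZu : ∀ u w, HasDerivAt (fun u => Z u w)
      ((fun i => -A i * (b' w + 2 * θ i 1 * b w) * Real.exp (θ i 1 * w)) ⬝ᵥ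
        expVec (fun i => θ i 0) u) u)
    (hZw : ∀ u w, HasDerivAt (Z u)
      ((fun i => -A i * (a' u + 2 * θ i 0 * a u) * Real.exp (θ i 0 * u)) ⬝ᵥ
        expVec (fun i => θ i 1) w) w) :
    (∀ u, a u = 0) ∧ ∀ w, b w = 0 := by
  have hl := h.nonresonantPair 0
  have hm := h.nonresonantPair 1
  have hA' : ∀ i, -A i ≠ 0 := fun i => neg_ne_zero.mpr (hA i)
  set k : Fin 2 → ℝ := fun i => -A i * (a' 0 + 2 * θ i 0 * a 0) * Real.exp (θ i 0 * 0) / θ i 1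
  set c : Fin 2 → ℝ := fun i => -A i * (b' 0 + 2 * θ i 1 * b 0) * Real.exp (θ i 1 * 0) / θ i 0
  obtain ⟨K, hfK, hgK⟩ := exists_bilinear_of_separated
    (dotProduct_expVec_sub_one_comm hl.ne_zero hm.ne_zero hZu hZw)
    hl.isUnit_det_expVec_sub_one hm.isUnit_det_expVec_sub_one
  refine eq_zero_of_coupled_exp_system hl hm two_ne_zero
    (fun i j hij => (hl.ne_two_mul i j hij).symm) (fun i j hij => (hm.ne_two_mul i j hij).symm)
    ha hb (fun i => div_ne_zero (hA' i) (hm.ne_zero i))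
    (fun i => div_ne_zero (hA' i) (hl.ne_zero i))
    (κ := k - K *ᵥ 1) (τ := c - Kᵀ *ᵥ 1) (K := K)
    (fun i u => ?_) (fun i w => ?_) (fun i j hij hres => ?_) ?_
  · have hi := congrFun (hfK u) i
    simp only [mulVec_sub, Pi.sub_apply, k] at hi ⊢
    linear_combination hi
  · have hi := congrFun (hgK w) i
    simp only [mulVec_sub, Pi.sub_apply, c] at hi ⊢
    linear_combination hi
  · refine h.apply_sub_three_smul_ne_zero i j hij ⟨?_, ?_⟩
    · have h3 : θ i 0 - 3 * θ j 0 = 0 := by linarith [hres.1]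
      simp [nullForm, h3]
    · have h3 : θ j 1 - 3 * θ i 1 = 0 := by linarith [hres.2]
      simp [nullForm, h3]
  · intro hdiag
    have hdet : A 0 * A 1 * (θ.det * QuadraticMap.polar nullForm (θ 0) (θ 1)) = 0 := by
      have := hl.ne_zero 0
      have := hl.ne_zero 1
      have := hm.ne_zero 0
      have := hm.ne_zero 1
      rw [polar_nullForm, det_fin_two]
      field_simp at hdiag
      linear_combination hdiag
    simp [hA, h.det_ne_zero, h.polar_ne_zero] at hdet

lemma linear_coeffs_eq_zero (h : Nonresonant nullForm θ) (hA : ∀ i, A i ≠ 0)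
    {α β : (Fin 2 → ℝ) → ℝ} (hα : Differentiable ℝ α) (hβ : Differentiable ℝ β)
    (hα₁ : ∀ q, coordGradient α q 1 = 0) (hβ₀ : ∀ q, coordGradient β q 0 = 0)
    (hE : ∀ q, (coordGradient α q 0 + coordGradient β q 1) * expPotential A θ q +
      α q * coordGradient (expPotential A θ) q 0 +
      β q * coordGradient (expPotential A θ) q 1 = 0) :
    (∀ q, α q = 0) ∧ ∀ q, β q = 0 := by
  obtain ⟨f, hf, rfl⟩ := exists_eq_comp_apply_of_coordGradient_eq_zero hα (i := 0)
    (by simpa [Fin.forall_fin_two] using hα₁)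
  obtain ⟨g, hg, rfl⟩ := exists_eq_comp_apply_of_coordGradient_eq_zero hβ (i := 1)
    (by simpa [Fin.forall_fin_two] using hβ₀)
  obtain ⟨hα₀, hβ₀⟩ := h.linear_part_eq_zero hA (fun u => (hf u).hasDerivAt)
    (fun w => (hg w).hasDerivAt) fun u w => by
      have := hE ![u, w]
      simp only [coordGradient_comp_apply (hf _), coordGradient_comp_apply (hg _),
        coordGradient_expPotential, expPotential, Fin.sum_univ_two, Pi.single_eq_same,
        Pi.add_apply, Pi.smul_apply, smul_eq_mul, dotProduct, cons_val_zero, cons_val_one,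
        Real.exp_add] at this ⊢
      linear_combination this
  exact ⟨fun q => hα₀ (q 0), fun q => hβ₀ (q 1)⟩

lemma square_coeffs_eq_zero (h : Nonresonant nullForm θ) (hA : ∀ i, A i ≠ 0)
    {a b Z : (Fin 2 → ℝ) → ℝ} (ha : Differentiable ℝ a) (hb : Differentiable ℝ b)
    (hZ : Differentiable ℝ Z)
    (ha₁ : ∀ q, coordGradient a q 1 = 0) (hb₀ : ∀ q, coordGradient b q 0 = 0)
    (hZ₁ : ∀ q, coordGradient Z q 1 =
      -(coordGradient a q 0 * expPotential A θ q +
        2 * a q * coordGradient (expPotential A θ) q 0))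
    (hZ₀ : ∀ q, coordGradient Z q 0 =
      -(coordGradient b q 1 * expPotential A θ q +
        2 * b q * coordGradient (expPotential A θ) q 1)) :
    (∀ q, a q = 0) ∧ ∀ q, b q = 0 := by
  obtain ⟨f, hf, rfl⟩ := exists_eq_comp_apply_of_coordGradient_eq_zero ha (i := 0)
    (by simpa [Fin.forall_fin_two] using ha₁)
  obtain ⟨g, hg, rfl⟩ := exists_eq_comp_apply_of_coordGradient_eq_zero hb (i := 1)
    (by simpa [Fin.forall_fin_two] using hb₀)
  obtain ⟨ha₀, hb₀⟩ := h.quadratic_part_eq_zero hA (Z := fun u w => Z ![u, w])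
    (fun u => (hf u).hasDerivAt) (fun w => (hg w).hasDerivAt)
    (fun u w => by
      have hd := hasDerivAt_comp_update (hZ ![u, w]) 0
      simp only [hZ₀, coordGradient_comp_apply (hg _), coordGradient_expPotential, expPotential,
        Fin.sum_univ_two, Pi.single_eq_same, Pi.add_apply, Pi.smul_apply, smul_eq_mul, dotProduct,
        cons_val_zero, cons_val_one, Real.exp_add, expVec] at hd ⊢
      refine (hd.congr_deriv ?_).congr_of_eventuallyEq (.of_forall fun t => ?_)
      · ring
      · exact congrArg Z (by ext i; fin_cases i <;> simp))
    (fun u w => by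
      have hd := hasDerivAt_comp_update (hZ ![u, w]) 1
      simp only [hZ₁, coordGradient_comp_apply (hf _), coordGradient_expPotential, expPotential,
        Fin.sum_univ_two, Pi.single_eq_same, Pi.add_apply, Pi.smul_apply, smul_eq_mul, dotProduct,
        cons_val_zero, cons_val_one, Real.exp_add, expVec] at hd ⊢
      refine (hd.congr_deriv ?_).congr_of_eventuallyEq (.of_forall fun t => ?_)
      · ring
      · exact congrArg Z (by ext i; fin_cases i <;> simp))
  exact ⟨fun q => ha₀ (q 0), fun q => hb₀ (q 1)⟩

lemma exists_eq_mul_naturalHam_nullForm_add_const (h : Nonresonant nullForm θ)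
    (hA : ∀ i, A i ≠ 0) {F : (Fin 2 → ℝ) → (Fin 2 → ℝ) → ℝ} (hF : IsMomentumQuadratic F)
    (hbr : ∀ q p, naturalHam nullForm (expPotential A θ) q p = 0 →
      poisson F (naturalHam nullForm (expPotential A θ)) q p = 0) :
    ∃ (φ : (Fin 2 → ℝ) → ℝ) (c : ℝ),
      ∀ q p, F q p = φ q * naturalHam nullForm (expPotential A θ) q p + c := by
  obtain ⟨a, b, η, α, β, γ, ha, hb, hη, hα, hβ, hγ, rfl⟩ := hF
  have hU := differentiable_expPotential A θ
  choose ha₁ hα₁ hyx hlin hxy hβ₀ hb₀ using fun q =>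
    determining_equations ha hb hη hα hβ hγ hU (hbr q)
  set Z : (Fin 2 → ℝ) → ℝ := fun q => γ q + η q * expPotential A θ q
  have hZ : Differentiable ℝ Z := hγ.add (hη.mul hU)
  have hgrad : ∀ q i, coordGradient Z q i = coordGradient γ q i +
      (η q * coordGradient (expPotential A θ) q i + expPotential A θ q * coordGradient η q i) :=
    fun q i => by
      rw [coordGradient_add (hγ q) (g := fun q => η q * expPotential A θ q) ((hη q).mul (hU q)),
        coordGradient_mul (hη q) (hU q)]
      rfl
  obtain ⟨hα0, hβ0⟩ := h.linear_coeffs_eq_zero hA hα hβ hα₁ hβ₀ hlin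
  obtain ⟨ha0, hb0⟩ := h.square_coeffs_eq_zero hA ha hb hZ ha₁ hb₀
    (fun q => by linear_combination hgrad q 1 + hyx q)
    (fun q => by linear_combination hgrad q 0 + hxy q)
  obtain rfl : a = fun _ => 0 := funext ha0
  obtain rfl : b = fun _ => 0 := funext hb0
  have hzero : ∀ (q : Fin 2 → ℝ), coordGradient (fun _ : Fin 2 → ℝ => (0 : ℝ)) q = 0 :=
    fun q => funext fun i => by simp [coordGradient]
  simp only [hzero, Pi.zero_apply, zero_add, mul_zero, zero_mul, add_zero] at hxy hyx
  have hZ0 : ∀ q, coordGradient Z q = 0 := fun q => by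
    refine funext (Fin.forall_fin_two.mpr ⟨?_, ?_⟩)
    · rw [hgrad, Pi.zero_apply]
      linear_combination hxy q
    · rw [hgrad, Pi.zero_apply]
      linear_combination hyx q
  refine ⟨η, Z 0, fun q p => ?_⟩
  rw [eq_of_coordGradient_eq_zero hZ hZ0 0 q]
  simp only [momentumQuadratic, naturalHam, nullForm, hα0, hβ0, Z]
  ring

lemma exists_eq_mul_naturalHam_add_const {J : (Fin 2 → ℝ) → ℝ} (h : Nonresonant J θ)
    {M : Matrix (Fin 2) (Fin 2) ℝ} (hM : IsUnit M.det) (hJ : J = fun p => nullForm (p ᵥ* M))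
    (hA : ∀ i, A i ≠ 0) {F : (Fin 2 → ℝ) → (Fin 2 → ℝ) → ℝ} (hF : IsMomentumQuadratic F)
    (hbr : ∀ q p, naturalHam J (expPotential A θ) q p = 0 →
      poisson F (naturalHam J (expPotential A θ)) q p = 0) :
    ∃ (φ : (Fin 2 → ℝ) → ℝ) (c : ℝ),
      ∀ q p, F q p = φ q * naturalHam J (expPotential A θ) q p + c := by
  have hnull : (fun q p => naturalHam J (expPotential A θ) (M *ᵥ q) (p ᵥ* M⁻¹)) =
      naturalHam nullForm (expPotential A (θ * M)) := by
    funext q p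
    simp only [naturalHam, hJ, expPotential_mulVec, vecMul_vecMul, nonsing_inv_mul M hM, vecMul_one]
  have hJd : Differentiable ℝ J := by
    rw [hJ]
    unfold nullForm vecMul dotProduct
    fun_prop
  obtain ⟨φ, c, hφ⟩ := (comp_vecMul hM.ne_zero (hJ ▸ h)).exists_eq_mul_naturalHam_nullForm_add_const
    hA (hF.comp_linear M M⁻¹) fun q p h0 => by
      rw [← hnull] at h0 ⊢
      rw [poisson_comp_linear hF.differentiable_left hF.differentiable_right
        (G := naturalHam J (expPotential A θ))
        (fun p => (differentiable_expPotential A θ).const_sub _) (fun q => hJd.sub_const _) hM]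
      exact hbr _ _ h0
  refine ⟨fun q => φ (M⁻¹ *ᵥ q), c, fun q p => ?_⟩
  have := hφ (M⁻¹ *ᵥ q) (p ᵥ* M)
  rw [← hnull] at this
  simpa only [mulVec_mulVec, vecMul_vecMul, mul_nonsing_inv M hM, one_mulVec, vecMul_one] using this

end Nonresonant

lemma exists_eq_nullForm_vecMul_of_discrim_pos {a b c : ℝ} (h : 0 < discrim a b c) :
    ∃ M : Matrix (Fin 2) (Fin 2) ℝ, IsUnit M.det ∧
      ∀ p : Fin 2 → ℝ, a * p 0 ^ 2 + b * (p 0 * p 1) + c * p 1 ^ 2 = nullForm (p ᵥ* M) := by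
  obtain rfl | ha := eq_or_ne a 0
  · refine ⟨!![0, b; 1, c], ?_, fun p => ?_⟩
    · rw [det_fin_two_of, isUnit_iff_ne_zero]
      rintro hb
      simp_all [discrim]
    · simp only [nullForm, vecMul, dotProduct, Fin.sum_univ_two, of_apply, cons_val]
      ring
  · have hs := Real.sq_sqrt h.le
    set s := √(discrim a b c)
    have hs0 : s ≠ 0 := (Real.sqrt_pos.mpr h).ne'
    refine ⟨!![2 * a, 1 / 2; b + s, (b - s) / (4 * a)], ?_, fun p => ?_⟩
    · rw [det_fin_two_of, isUnit_iff_ne_zero]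
      convert neg_ne_zero.mpr hs0 using 1
      field_simp
      ring
    · simp only [nullForm, vecMul, dotProduct, Fin.sum_univ_two, of_apply, cons_val]
      rw [discrim] at hs
      field_simp
      linear_combination 2 * p 1 ^ 2 * hs

end NullCoordinates

section RicciFlat

open Matrix

lemma Ham_eq_inv_vol_mul_naturalHam (d1 d2 : ℕ) (S : (Fin 2 → ℝ) → ℝ) :
    Ham d1 d2 S = fun q p =>
      (vol d1 d2 q)⁻¹ * naturalHam (Jform d1 d2) (fun q => S q * vol d1 d2 q ^ 2) q p := by
  funext q p
  have hv : vol d1 d2 q ≠ 0 := Real.exp_ne_zero _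
  simp only [Ham, naturalHam]
  field_simp

/-- The exponents of `e^{-q₁} v²` and `e^{-q₂} v²`, as the rows of a matrix. -/
def ricciExponents (d1 d2 : ℕ) : Matrix (Fin 2) (Fin 2) ℝ := !![(d1 : ℝ) - 1, d2; d1, (d2 : ℝ) - 1]

lemma mul_vol_sq_eq_expPotential (d1 d2 : ℕ) (A1 A2 : ℝ) :
    (fun q => (A1 * Real.exp (-(q 0)) + A2 * Real.exp (-(q 1))) * vol d1 d2 q ^ 2) =
      expPotential ![A1, A2] (ricciExponents d1 d2) := by
  funext q
  simp only [expPotential, ricciExponents, Fin.sum_univ_two, cons_val_zero, cons_val_one,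
    dotProduct, of_apply, vol, ← Real.exp_nat_mul, add_mul, mul_assoc, ← Real.exp_add]
  congr 3 <;> (push_cast; ring_nf)

lemma exists_Jform_eq_nullForm_vecMul {d1 d2 : ℕ} (h1 : 1 ≤ d1) (h2 : 1 ≤ d2) :
    ∃ M : Matrix (Fin 2) (Fin 2) ℝ, IsUnit M.det ∧ Jform d1 d2 = fun p => nullForm (p ᵥ* M) := by
  have h1' : (1 : ℝ) ≤ d1 := by exact_mod_cast h1
  have h2' : (1 : ℝ) ≤ d2 := by exact_mod_cast h2
  have hn : (0 : ℝ) < d1 + d2 - 1 := by linarith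
  set k : ℝ := 1 / (d1 + d2 - 1) with hk
  have hdisc : discrim (k - 1 / d1) (2 * k) (k - 1 / d2) = 4 * k / (d1 * d2) := by
    rw [discrim, hk]
    field_simp
    ring
  have hpos : 0 < discrim (k - 1 / d1) (2 * k) (k - 1 / d2) := by
    rw [hdisc]
    positivity
  obtain ⟨M, hM, hJ⟩ := exists_eq_nullForm_vecMul_of_discrim_pos hpos
  refine ⟨M, hM, funext fun p => ?_⟩
  rw [← hJ, Jform]
  ring

lemma Jform_vecMul_ricciExponents {d1 d2 : ℕ} (h1 : 1 ≤ d1) (h2 : 1 ≤ d2) (r : Fin 2 → ℝ) :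
    Jform d1 d2 (r ᵥ* ricciExponents d1 d2) = (r 0 + r 1) ^ 2 - r 0 ^ 2 / d1 - r 1 ^ 2 / d2 := by
  have h1' : (1 : ℝ) ≤ d1 := by exact_mod_cast h1
  have h2' : (1 : ℝ) ≤ d2 := by exact_mod_cast h2
  have hn : (d1 + d2 - 1 : ℝ) ≠ 0 := by linarith
  simp only [Jform, ricciExponents, vecMul, dotProduct, Fin.sum_univ_two, of_apply, cons_val]
  field_simp
  ring

lemma nonresonant_one {x y : ℝ} (hx : x ≠ 1) (hy : y ≠ 1) (hxy : x + y ≠ 0) (hxy' : x + 4 * y ≠ 1)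
    (hyx' : 4 * x + y ≠ 1) (hthree : ¬(x = 2 / 5 ∧ y = 2 / 5)) :
    Nonresonant (fun r => (r 0 + r 1) ^ 2 - x * r 0 ^ 2 - y * r 1 ^ 2) 1 where
  det_ne_zero := by simp
  apply_ne_zero := by simp [Fin.forall_fin_two, sub_eq_zero, hx.symm, hy.symm]
  polar_ne_zero := by
    have h2 : QuadraticMap.polar (fun r : Fin 2 → ℝ => (r 0 + r 1) ^ 2 - x * r 0 ^ 2 - y * r 1 ^ 2)
        ((1 : Matrix (Fin 2) (Fin 2) ℝ) 0) ((1 : Matrix (Fin 2) (Fin 2) ℝ) 1) = 2 := by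
      simp only [QuadraticMap.polar, Pi.add_apply, one_apply_eq, one_apply_ne zero_ne_one,
        one_apply_ne one_ne_zero]
      ring
    simp [h2]
  apply_sub_ne_zero := by
    have h : -x - y ≠ 0 := by rwa [← neg_add', neg_ne_zero]
    simpa [Fin.forall_fin_two] using h
  apply_sub_two_smul_ne_zero := by
    have h01 : 1 - x - y * 4 ≠ 0 := fun h => hxy' (by linear_combination -h)
    have h10 : 1 - x * 4 - y ≠ 0 := fun h => hyx' (by linear_combination -h)
    norm_num [Fin.forall_fin_two, h01, h10]
  apply_sub_three_smul_ne_zero := by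
    have h01 : 4 - x - y * 9 = 0 → 4 - x * 9 - y ≠ 0 :=
      fun h h' => hthree ⟨by linarith, by linarith⟩
    have h10 : 4 - x * 9 - y = 0 → 4 - x - y * 9 ≠ 0 := fun h h' => h01 h' h
    norm_num +contextual [Fin.forall_fin_two, h01, h10]

lemma nonresonant_Jform {d1 d2 : ℕ} (h1 : 2 ≤ d1) (h2 : 2 ≤ d2)
    (hne1 : 4 * (d1 : ℝ) ≠ d2 * (d1 - 1)) (hne2 : 4 * (d2 : ℝ) ≠ d1 * (d2 - 1)) :
    Nonresonant (Jform d1 d2) (ricciExponents d1 d2) := by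
  have h1' : (2 : ℝ) ≤ d1 := by exact_mod_cast h1
  have h2' : (2 : ℝ) ≤ d2 := by exact_mod_cast h2
  have hdet : (ricciExponents d1 d2).det ≠ 0 := by
    rw [ricciExponents, det_fin_two_of]
    linarith
  have hthree : (d1 : ℝ)⁻¹ ≠ 2 / 5 := fun h => by
    have h5 : 5 = (d1 : ℝ) * 2 := by
      field_simp at h
      exact h
    norm_cast at h5
    omega
  rw [← one_mul (ricciExponents d1 d2)]
  refine Nonresonant.comp_vecMul hdet ?_
  simp only [Jform_vecMul_ricciExponents (one_le_two.trans h1) (one_le_two.trans h2),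
    div_eq_inv_mul]
  refine nonresonant_one ?_ ?_ (by positivity) (fun h => hne1 ?_) (fun h => hne2 ?_)
    (fun h => hthree h.1)
  · exact fun h => by linarith [inv_eq_one.mp h]
  · exact fun h => by linarith [inv_eq_one.mp h]
  · field_simp at h
    linear_combination h
  · field_simp at h
    linear_combination h

lemma four_mul_ne_of_le {d1 d2 : ℕ} (h1 : 2 ≤ d1) (hle : d1 ≤ d2)
    (hne : 4 * (d1 : ℝ) ≠ d2 * (d1 - 1)) : 4 * (d2 : ℝ) ≠ d1 * (d2 - 1) := by
  intro h
  have hnat : d1 * d2 = 4 * d2 + d1 := by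
    have : (d1 * d2 : ℝ) = 4 * d2 + d1 := by linear_combination -h
    exact_mod_cast this
  have hd1 : d1 = 5 := by
    have h4 : 4 < d1 := by nlinarith
    have h6 : d1 < 6 := by nlinarith
    omega
  have hd2 : d2 = 5 := by
    subst hd1
    omega
  subst hd1 hd2
  norm_num at hne

lemma Jform_single_ne_zero {d1 d2 : ℕ} (h1 : 1 ≤ d1) (h2 : 2 ≤ d2) : Jform d1 d2 ![1, 0] ≠ 0 := by
  have h1' : (1 : ℝ) ≤ d1 := by exact_mod_cast h1
  have h2' : (2 : ℝ) ≤ d2 := by exact_mod_cast h2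
  have hn : (d1 + d2 - 1 : ℝ) ≠ 0 := by linarith
  have hJ : Jform d1 d2 ![1, 0] = (1 - d2) / ((d1 + d2 - 1) * d1) := by
    simp only [Jform, cons_val_zero, cons_val_one]
    field_simp
    ring
  rw [hJ]
  exact div_ne_zero (by linarith) (mul_ne_zero hn (by linarith))

variable {d1 d2 : ℕ} {S F20 F02 F11 F1 F2 F0 : (Fin 2 → ℝ) → ℝ}

lemma eq_mul_vol_div_of_eq_mul_Ham_add_const (hJ : Jform d1 d2 ![1, 0] ≠ 0) {q : Fin 2 → ℝ}
    {x c : ℝ} (h : ∀ p, momentumQuadratic F20 F02 F11 F1 F2 F0 q p = x * Ham d1 d2 S q p + c) :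
    x = F20 q * vol d1 d2 q / Jform d1 d2 ![1, 0] := by
  have hv : vol d1 d2 q ≠ 0 := Real.exp_ne_zero _
  have hneg : Jform d1 d2 ![-1, 0] = Jform d1 d2 ![1, 0] := by simp [Jform]
  have hzero : Jform d1 d2 0 = 0 := by simp [Jform]
  have hpos := h ![1, 0]
  have hneg' := h ![-1, 0]
  have hzero' := h 0
  simp only [momentumQuadratic, Ham, hneg, hzero, cons_val_zero, cons_val_one, Pi.zero_apply]
    at hpos hneg' hzero'
  have hcoeff : F20 q = x * (vol d1 d2 q)⁻¹ * Jform d1 d2 ![1, 0] := by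
    linear_combination (hpos + hneg') / 2 - hzero'
  rw [hcoeff]
  field_simp

theorem quadratic_first_integral_trivial_case_i_general (h1 : 2 ≤ d1) (h2 : 2 ≤ d2)
    (hne1 : 4 * (d1 : ℝ) ≠ d2 * (d1 - 1)) (hne2 : 4 * (d2 : ℝ) ≠ d1 * (d2 - 1))
    {A1 A2 : ℝ} (hA1 : A1 ≠ 0) (hA2 : A2 ≠ 0)
    (hS : S = fun q => A1 * Real.exp (-(q 0)) + A2 * Real.exp (-(q 1)))
    (hF20 : Differentiable ℝ F20) (hF02 : Differentiable ℝ F02) (hF11 : Differentiable ℝ F11)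
    (hF1 : Differentiable ℝ F1) (hF2 : Differentiable ℝ F2) (hF0 : Differentiable ℝ F0)
    (hbracket : ∀ q p, Ham d1 d2 S q p = 0 →
      poisson (momentumQuadratic F20 F02 F11 F1 F2 F0) (Ham d1 d2 S) q p = 0) :
    ∃ c : ℝ, ∀ q p, momentumQuadratic F20 F02 F11 F1 F2 F0 q p =
      F20 q * vol d1 d2 q / Jform d1 d2 ![1, 0] * Ham d1 d2 S q p + c := by
  obtain ⟨M, hM, hJ⟩ :=
    exists_Jform_eq_nullForm_vecMul (one_le_two.trans h1) (one_le_two.trans h2)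
  let K := naturalHam (Jform d1 d2) (expPotential ![A1, A2] (ricciExponents d1 d2))
  have hHam : Ham d1 d2 S = fun q p => (vol d1 d2 q)⁻¹ * K q p := by
    rw [Ham_eq_inv_vol_mul_naturalHam, hS, mul_vol_sq_eq_expPotential]
  rw [hHam] at hbracket
  have hbracket_conformal : ∀ q p, K q p = 0 →
      poisson (momentumQuadratic F20 F02 F11 F1 F2 F0) K q p = 0 :=
    poisson_eq_zero_of_mul (g := fun q => (vol d1 d2 q)⁻¹)
      (by unfold vol; fun_prop (disch := simp)) (fun q => inv_ne_zero (Real.exp_ne_zero _))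
      (fun p => (differentiable_expPotential _ _).const_sub _)
      (fun q => Differentiable.sub_const (by unfold Jform; fun_prop) _) hbracket
  obtain ⟨φ, c, h⟩ : ∃ (φ : (Fin 2 → ℝ) → ℝ) (c : ℝ), ∀ q p,
      momentumQuadratic F20 F02 F11 F1 F2 F0 q p = φ q * K q p + c :=
    (nonresonant_Jform h1 h2 hne1 hne2).exists_eq_mul_naturalHam_add_const hM hJ
      (by simp [Fin.forall_fin_two, hA1, hA2])
      ⟨F20, F02, F11, F1, F2, F0, hF20, hF02, hF11, hF1, hF2, hF0, rfl⟩ hbracket_conformal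
  have hφ : ∀ q p, momentumQuadratic F20 F02 F11 F1 F2 F0 q p =
      φ q * vol d1 d2 q * Ham d1 d2 S q p + c := fun q p => by
    have hv : vol d1 d2 q ≠ 0 := Real.exp_ne_zero _
    rw [h q p, hHam]
    field_simp
  have hJ₁ := Jform_single_ne_zero (one_le_two.trans h1) h2
  exact ⟨c, fun q p => eq_mul_vol_div_of_eq_mul_Ham_add_const hJ₁ (hφ q) ▸ hφ q p⟩

end RicciFlat

/-- Dancer–Wang: for `S(q) = A₁e^{−q₁} + A₂e^{−q₂}` with `2 ≤ d₁ ≤ d₂` and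
`4d₁ ≠ d₂(d₁−1)`, every quadratic-in-momenta first integral on `V_H` is trivial. -/
theorem quadratic_first_integral_trivial_case_i
    (d1 d2 : ℕ) (hd1pos : 0 < d1) (hd2pos : 0 < d2) (hd1 : 2 ≤ d1) (hle : d1 ≤ d2)
    (A1 A2 : ℝ) (hA1 : 0 < A1) (hA2 : 0 < A2)
    (hne : 4 * (d1 : ℝ) ≠ (d2 : ℝ) * ((d1 : ℝ) - 1))
    (S : (Fin 2 → ℝ) → ℝ)
    (hS : S = fun q => A1 * Real.exp (-(q 0)) + A2 * Real.exp (-(q 1)))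
    (F20 F02 F11 F1 F2 F0 : (Fin 2 → ℝ) → ℝ)
    (hF20 : ContDiff ℝ 1 F20) (hF02 : ContDiff ℝ 1 F02) (hF11 : ContDiff ℝ 1 F11)
    (hF1 : ContDiff ℝ 1 F1) (hF2 : ContDiff ℝ 1 F2) (hF0 : ContDiff ℝ 1 F0)
    (F : (Fin 2 → ℝ) → (Fin 2 → ℝ) → ℝ)
    (hF : F = fun q p => F20 q * (p 0) ^ 2 + F02 q * (p 1) ^ 2 + F11 q * (p 0) * (p 1) +
      F1 q * p 0 + F2 q * p 1 + F0 q)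
    (hbracket : ∀ q p : Fin 2 → ℝ, Ham d1 d2 S q p = 0 → poisson F (Ham d1 d2 S) q p = 0) :
    ∃ (φ : (Fin 2 → ℝ) → ℝ) (c : ℝ), ContDiff ℝ 1 φ ∧
      ∀ q p : Fin 2 → ℝ, F q p = φ q * Ham d1 d2 S q p + c := by
  subst hF
  obtain ⟨c, h⟩ := quadratic_first_integral_trivial_case_i_general hd1 (hd1.trans hle) hne
    (four_mul_ne_of_le hd1 hle hne) hA1.ne' hA2.ne' hS (hF20.differentiable one_ne_zero)
    (hF02.differentiable one_ne_zero) (hF11.differentiable one_ne_zero)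
    (hF1.differentiable one_ne_zero) (hF2.differentiable one_ne_zero)
    (hF0.differentiable one_ne_zero) hbracket
  exact ⟨_, c, by unfold vol; fun_prop, h⟩
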